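/- Let G be a tree (a connected acyclic simple graph) with vertex set V and graph metric d, let v ∈ V, and let r ≥ 1 and k ≥ 1 be integers. On the annulus A_k = {x ∈ V : k·r ≤ d(v,x) ≤ (k+1)·r}, define x ∼_k y if and only if the median m of the triple x, y, v satisfies 2·d(v,m) ≥ (2k−1)·r. Then: (1) every equivalence class of ∼_k has diameter ≤ 3r; (2) any two distinct equivalence classes of ∼_k are at distance ≥ r from each other; (3) if x ∈ A_k and y ∈ A_l with l ≥ k + 2, then d(x,y) ≥ r. -/

import Mathlib

/-- `m` is the median (center of the tripod) of the vertices `x`, `y`, `v` in the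
graph `G`, with respect to the graph metric. -/
def IsTreeMedian {V : Type*} (G : SimpleGraph V) (x y v m : V) : Prop :=
  G.dist x y = G.dist x m + G.dist m y ∧
  G.dist x v = G.dist x m + G.dist m v ∧
  G.dist y v = G.dist y m + G.dist m v

/-!
In a tree, the vertices `w` with `d(a, w) + d(w, b) = d(a, b)` are those on the path from `a` to
`b`. Hence the vertex of the path from `x` to `y` closest to `v` is a median `m` of `x, y, v`, and
`2 d(v, m) = d(v, x) + d(v, y) - d(x, y)` is twice the Gromov product `(x|y)` based at `v`. So
`x ∼ₖ y` is a lower bound on `(x|y)`. It is transitive because `(x|z) ≥ min ((x|y), (y|z))`: the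
medians of `x, y, v` and of `y, z, v` both lie on the path from `v` to `y`, and the one closer to
`v` is at distance at most `(x|z)` from `v`. The bounds inside an annulus are read off from the
formula for `(x|y)`; two annuli are compared by the triangle inequality.
-/

section Walks

open SimpleGraph

variable {V : Type*} {G : SimpleGraph V} {a b c m n w : V}

lemma isPath_append_of_forall_eq {p : G.Walk a b} {q : G.Walk b c} (hp : p.IsPath) (hq : q.IsPath)
    (h : ∀ w ∈ p.support, w ∈ q.support → w = b) : (p.append q).IsPath := by
  have hb : b ∉ q.support.tail := by
    have hq_nodup := hq.support_nodup
    rw [← q.cons_tail_support] at hq_nodup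
    exact (List.nodup_cons.1 hq_nodup).1
  rw [Walk.isPath_def, Walk.support_append]
  refine hp.support_nodup.append hq.support_nodup.tail fun w hwp hwq => hb ?_
  exact h w hwp (List.mem_of_mem_tail hwq) ▸ hwq

lemma length_eq_dist_of_isPath (hG : G.IsAcyclic) {p : G.Walk a b} (hp : p.IsPath) :
    p.length = G.dist a b := by
  obtain ⟨q, hq, hq_length⟩ := p.reachable.exists_path_of_dist
  have hpq : p = q :=
    congrArg Subtype.val ((hG.subsingleton_path a b).elim ⟨p, hp⟩ ⟨q, hq⟩)
  rw [hpq, hq_length]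

lemma mem_support_iff_dist_add_dist_eq (hG : G.IsTree) {p : G.Walk a b} (hp : p.IsPath) :
    w ∈ p.support ↔ G.dist a w + G.dist w b = G.dist a b := by
  constructor
  · intro hw
    obtain ⟨q, s, hq, hs, rfl⟩ := hp.mem_support_iff_exists_append.1 hw
    rw [← length_eq_dist_of_isPath hG.isAcyclic hq, ← length_eq_dist_of_isPath hG.isAcyclic hs,
      ← length_eq_dist_of_isPath hG.isAcyclic hp, Walk.length_append]
  · intro hw
    obtain ⟨q, hq⟩ := hG.connected.exists_walk_length_eq_dist a w
    obtain ⟨s, hs⟩ := hG.connected.exists_walk_length_eq_dist w b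
    have hqs : (q.append s).IsPath :=
      Walk.isPath_of_length_eq_dist _ (by rw [Walk.length_append, hq, hs, hw])
    rw [(hG.existsUnique_path a b).unique hp hqs]
    exact q.support_subset_support_append_left s q.end_mem_support

lemma dist_add_dist_eq_of_forall_dist_le (hG : G.IsTree) {p : G.Walk m b} (hp : p.IsPath)
    (hm : ∀ w ∈ p.support, G.dist a m ≤ G.dist a w) :
    G.dist a m + G.dist m b = G.dist a b := by
  obtain ⟨q, hq, -⟩ := hG.connected.exists_path_of_dist a m
  have hqp : ∀ w ∈ q.support, w ∈ p.support → w = m := by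
    intro w hwq hwp
    have hw_between := (mem_support_iff_dist_add_dist_eq hG hq).1 hwq
    have hw_far := hm w hwp
    exact hG.connected.dist_eq_zero_iff.1 (by omega)
  exact (mem_support_iff_dist_add_dist_eq hG (isPath_append_of_forall_eq hq hp hqp)).1
    (q.support_subset_support_append_left p q.end_mem_support)

lemma dist_add_dist_eq_of_dist_le (hG : G.IsTree)
    (hm : G.dist a m + G.dist m b = G.dist a b) (hn : G.dist a n + G.dist n b = G.dist a b)
    (hmn : G.dist a m ≤ G.dist a n) : G.dist m n + G.dist n b = G.dist m b := by
  obtain ⟨p, hp, -⟩ := hG.connected.exists_path_of_dist a b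
  obtain ⟨q, s, hq, hs, rfl⟩ := hp.mem_support_iff_exists_append.1
    ((mem_support_iff_dist_add_dist_eq hG hp).2 hm)
  have hn_mem := (mem_support_iff_dist_add_dist_eq hG hp).2 hn
  rcases (Walk.mem_support_append_iff _ _).1 hn_mem with hnq | hns
  · have hn_between := (mem_support_iff_dist_add_dist_eq hG hq).1 hnq
    obtain rfl : n = m := hG.connected.dist_eq_zero_iff.1 (by omega)
    rw [dist_self, zero_add]
  · exact (mem_support_iff_dist_add_dist_eq hG hs).1 hns

end Walks

section Median

variable {V : Type*} {G : SimpleGraph V}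

lemma IsTreeMedian.symm {x y v m : V} (hm : IsTreeMedian G x y v m) : IsTreeMedian G y x v m :=
  ⟨by rw [G.dist_comm, hm.1, add_comm, G.dist_comm, G.dist_comm (u := x)], hm.2.2, hm.2.1⟩

lemma IsTreeMedian.dist_add_dist_left {x y v m : V} (hm : IsTreeMedian G x y v m) :
    G.dist v m + G.dist m x = G.dist v x := by
  rw [G.dist_comm (u := v) (v := x), hm.2.1, add_comm, G.dist_comm, G.dist_comm (u := v)]

lemma IsTreeMedian.dist_add_dist_right {x y v m : V} (hm : IsTreeMedian G x y v m) :
    G.dist v m + G.dist m y = G.dist v y :=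
  hm.symm.dist_add_dist_left

lemma exists_isTreeMedian (hG : G.IsTree) (x y v : V) : ∃ m, IsTreeMedian G x y v m := by
  obtain ⟨p, hp, -⟩ := hG.connected.exists_path_of_dist x y
  obtain ⟨m, hm, hm_min⟩ := Set.exists_min_image {w | w ∈ p.support} (G.dist v)
    p.support.finite_toSet ⟨x, p.start_mem_support⟩
  have hxy := (mem_support_iff_dist_add_dist_eq hG hp).1 hm
  obtain ⟨q, s, hq, hs, rfl⟩ := hp.mem_support_iff_exists_append.1 hm
  have hvx : G.dist v m + G.dist m x = G.dist v x :=
    dist_add_dist_eq_of_forall_dist_le hG hq.reverse fun w hw =>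
      hm_min w (q.support_subset_support_append_left s (by simpa using hw))
  have hvy : G.dist v m + G.dist m y = G.dist v y :=
    dist_add_dist_eq_of_forall_dist_le hG hs fun w hw =>
      hm_min w (q.support_subset_support_append_right s hw)
  refine ⟨m, hxy.symm, ?_, ?_⟩
  · rw [G.dist_comm, ← hvx, add_comm, G.dist_comm, G.dist_comm (u := v)]
  · rw [G.dist_comm, ← hvy, add_comm, G.dist_comm, G.dist_comm (u := v)]

end Median

section GromovProduct

variable {V : Type*} {G : SimpleGraph V} {v x y z : V} {c : ℤ}

/-- Twice the Gromov product `(x|y)` based at `v` for the graph metric. The factor `2` avoids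
fractions, and the values are taken in `ℤ` so that the subtraction is not truncated. -/
noncomputable def doubleGromovProduct (G : SimpleGraph V) (v x y : V) : ℤ :=
  G.dist v x + G.dist v y - G.dist x y

lemma doubleGromovProduct_comm (G : SimpleGraph V) (v x y : V) :
    doubleGromovProduct G v x y = doubleGromovProduct G v y x := by
  rw [doubleGromovProduct, doubleGromovProduct, G.dist_comm (u := x), add_comm (G.dist v x : ℤ)]

lemma IsTreeMedian.two_mul_dist_eq {m : V} (hm : IsTreeMedian G x y v m) :
    2 * (G.dist v m : ℤ) = doubleGromovProduct G v x y := by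
  rw [doubleGromovProduct, ← hm.dist_add_dist_left, ← hm.dist_add_dist_right, hm.1,
    G.dist_comm (u := x)]
  push_cast
  ring

lemma exists_isTreeMedian_and_le_iff (hG : G.IsTree) :
    (∃ m, IsTreeMedian G x y v m ∧ c ≤ 2 * (G.dist v m : ℤ)) ↔
      c ≤ doubleGromovProduct G v x y := by
  constructor
  · rintro ⟨m, hm, hc⟩
    rwa [hm.two_mul_dist_eq] at hc
  · intro hc
    obtain ⟨m, hm⟩ := exists_isTreeMedian hG x y v
    exact ⟨m, hm, by rwa [hm.two_mul_dist_eq]⟩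

lemma IsTreeMedian.two_mul_dist_le_doubleGromovProduct {m n : V} (hG : G.IsTree)
    (hm : IsTreeMedian G x y v m) (hn : IsTreeMedian G y z v n) (hmn : G.dist v m ≤ G.dist v n) :
    2 * (G.dist v m : ℤ) ≤ doubleGromovProduct G v x z := by
  have hmny : G.dist m n + G.dist n y = G.dist m y :=
    dist_add_dist_eq_of_dist_le hG hm.dist_add_dist_right hn.dist_add_dist_left hmn
  have hxz : G.dist x z ≤ G.dist m x + G.dist m n + G.dist n z := by
    calc G.dist x z ≤ G.dist x n + G.dist n z := hG.connected.dist_triangle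
      _ ≤ G.dist x m + G.dist m n + G.dist n z := by gcongr; exact hG.connected.dist_triangle
      _ = G.dist m x + G.dist m n + G.dist n z := by rw [G.dist_comm (u := x)]
  have hvx := hm.dist_add_dist_left
  have hvy := hm.dist_add_dist_right
  have hvy' := hn.dist_add_dist_left
  have hvz := hn.dist_add_dist_right
  rw [doubleGromovProduct]
  omega

lemma min_doubleGromovProduct_le (hG : G.IsTree) (v x y z : V) :
    min (doubleGromovProduct G v x y) (doubleGromovProduct G v y z) ≤
      doubleGromovProduct G v x z := by
  obtain ⟨m, hm⟩ := exists_isTreeMedian hG x y v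
  obtain ⟨n, hn⟩ := exists_isTreeMedian hG y z v
  rw [← hm.two_mul_dist_eq, ← hn.two_mul_dist_eq]
  rcases le_total (G.dist v m) (G.dist v n) with hmn | hnm
  · exact min_le_of_left_le (hm.two_mul_dist_le_doubleGromovProduct hG hn hmn)
  · rw [doubleGromovProduct_comm]
    exact min_le_of_right_le (hn.symm.two_mul_dist_le_doubleGromovProduct hG hm.symm hnm)

lemma dist_le_of_le_doubleGromovProduct {R : ℕ} (hx : G.dist v x ≤ R) (hy : G.dist v y ≤ R)
    (hc : c ≤ doubleGromovProduct G v x y) : (G.dist x y : ℤ) ≤ 2 * R - c := by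
  rw [doubleGromovProduct] at hc
  omega

lemma two_mul_sub_dist_le_doubleGromovProduct {R : ℕ} (hx : R ≤ G.dist v x)
    (hy : R ≤ G.dist v y) : 2 * (R : ℤ) - G.dist x y ≤ doubleGromovProduct G v x y := by
  rw [doubleGromovProduct]
  omega

end GromovProduct

/-- Properties of the equivalence classes of the relation `∼_k` on the annulus
`A_k = {x : k·r ≤ d(v,x) ≤ (k+1)·r}` of a tree, where `x ∼_k y` iff the median `m`
of `x, y, v` satisfies `2·d(v,m) ≥ (2k−1)·r`:
(1) every class has diameter ≤ 3r;
(2) distinct classes are at distance ≥ r;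
(3) points of `A_k` and `A_l` with `l ≥ k+2` are at distance ≥ r. -/
theorem stmt_3 {V : Type*} (G : SimpleGraph V) (hG : G.IsTree) (v : V)
    (r k : ℕ) (hr : 1 ≤ r) (hk : 1 ≤ k) :
    let A : ℕ → Set V := fun j => {x | j * r ≤ G.dist v x ∧ G.dist v x ≤ (j + 1) * r}
    let rel : V → V → Prop := fun x y =>
      ∃ m : V, IsTreeMedian G x y v m ∧
        (2 * (k : ℤ) - 1) * r ≤ 2 * (G.dist v m : ℤ)
    let cls : V → Set V := fun x => {y ∈ A k | rel x y}
    -- (1) every equivalence class has diameter ≤ 3r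
    (∀ x ∈ A k, ∀ y ∈ cls x, ∀ z ∈ cls x, G.dist y z ≤ 3 * r) ∧
    -- (2) distinct equivalence classes are at distance ≥ r
    (∀ x ∈ A k, ∀ x' ∈ A k, cls x ≠ cls x' →
      ∀ y ∈ cls x, ∀ z ∈ cls x', r ≤ G.dist y z) ∧
    -- (3) points in annuli whose indices differ by at least 2 are at distance ≥ r
    (∀ l : ℕ, k + 2 ≤ l → ∀ x ∈ A k, ∀ y ∈ A l, r ≤ G.dist x y) := by
  intro A rel cls
  have rel_iff (x y) : rel x y ↔ (2 * (k : ℤ) - 1) * r ≤ doubleGromovProduct G v x y :=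
    exists_isTreeMedian_and_le_iff hG
  have rel_symm {x y} (h : rel x y) : rel y x := by
    rwa [rel_iff, doubleGromovProduct_comm, ← rel_iff]
  have rel_trans {x y z} (hxy : rel x y) (hyz : rel y z) : rel x z := by
    rw [rel_iff] at hxy hyz ⊢
    exact (le_min hxy hyz).trans (min_doubleGromovProduct_le hG v x y z)
  refine ⟨fun x _ y hy z hz => ?_, fun x _ x' _ hne y hy z hz => ?_, fun l hl x hx y hy => ?_⟩
  · have hyz : rel y z := rel_trans (rel_symm hy.2) hz.2
    have hdist := dist_le_of_le_doubleGromovProduct hy.1.2 hz.1.2 ((rel_iff y z).1 hyz)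
    zify at hdist ⊢
    linarith
  · contrapose! hne with hlt
    have hprod := two_mul_sub_dist_le_doubleGromovProduct hy.1.1 hz.1.1
    have hyz : rel y z := (rel_iff y z).2 (by zify at hlt hprod; linarith)
    have hxx' : rel x x' := rel_trans hy.2 (rel_trans hyz (rel_symm hz.2))
    ext w
    exact and_congr_right fun _ => ⟨rel_trans (rel_symm hxx'), rel_trans hxx'⟩
  · have htri : G.dist v y ≤ G.dist v x + G.dist x y := hG.connected.dist_triangle
    have hlr : (k + 2) * r ≤ l * r := Nat.mul_le_mul_right r hl
    linarith [hx.2, hy.1]
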